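/- arXiv:2110.06174 — 3 statements merged into one kernel-verified Lean document; each statement's English description precedes it below -/
import Mathlib

section
/- Suppose γ : ℝ → ℝ⁶ is a solution of the Hamiltonian system associated to the regularized Hamiltonian Γ (with fixed energy E < 0) satisfying, for some τ > 0 and some a, b, c, d ∈ ℝ, γ(0) = (0, a, b, √2, −c, d) and γ(2τ) = (b, 0, a, d, −√2, −c). Then γ satisfies γ(s + 2τ) = S_f γ(s) for all s ∈ ℝ, and consequently γ is 12τ-periodic: γ(s + 12τ) = γ(s) for all s ∈ ℝ. -/
/-- The regularized Hamiltonian `Γ` of the eight-body cubic configuration, with fixed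
energy `E`, as a function of `x = (Q₁,Q₂,Q₃,P₁,P₂,P₃) ∈ ℝ⁶`. -/
noncomputable def cubicGamma (E : ℝ) (x : Fin 6 → ℝ) : ℝ :=
  (x 3) ^ 2 * (x 1) ^ 2 * (x 2) ^ 2 + (x 0) ^ 2 * (x 4) ^ 2 * (x 2) ^ 2 +
      (x 0) ^ 2 * (x 1) ^ 2 * (x 5) ^ 2
    - 2 * (x 0) ^ 2 * (x 1) ^ 2 * (x 2) ^ 2 / Real.sqrt ((x 0) ^ 4 + (x 1) ^ 4 + (x 2) ^ 4)
    - 2 * (x 0) ^ 2 * (x 1) ^ 2 * (x 2) ^ 2 / Real.sqrt ((x 0) ^ 4 + (x 1) ^ 4)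
    - 2 * (x 0) ^ 2 * (x 1) ^ 2 * (x 2) ^ 2 / Real.sqrt ((x 0) ^ 4 + (x 2) ^ 4)
    - 2 * (x 0) ^ 2 * (x 1) ^ 2 * (x 2) ^ 2 / Real.sqrt ((x 1) ^ 4 + (x 2) ^ 4)
    - 2 * (x 1) ^ 2 * (x 2) ^ 2 - 2 * (x 0) ^ 2 * (x 2) ^ 2 - 2 * (x 0) ^ 2 * (x 1) ^ 2
    - E * (x 0) ^ 2 * (x 1) ^ 2 * (x 2) ^ 2

/-- The index in `Fin 6` of the coordinate `Qᵢ`. -/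
def Qidx (i : Fin 3) : Fin 6 := ⟨i.val, by omega⟩

/-- The index in `Fin 6` of the coordinate `Pᵢ`. -/
def Pidx (i : Fin 3) : Fin 6 := ⟨i.val + 3, by omega⟩

/-- Partial derivative of `f : ℝ⁶ → ℝ` with respect to the `i`-th coordinate at `x`. -/
noncomputable def pderiv6 (f : (Fin 6 → ℝ) → ℝ) (i : Fin 6) (x : Fin 6 → ℝ) : ℝ :=
  deriv (fun t => f (Function.update x i t)) (x i)

/-- `γ : ℝ → ℝ⁶` is a solution of the Hamiltonian system associated to `Γ` (energy `E`):
`Qᵢ′(s) = ∂Γ/∂Pᵢ(γ(s))` and `Pᵢ′(s) = −∂Γ/∂Qᵢ(γ(s))` for `i = 1,2,3`. -/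
def IsCubicSol (E : ℝ) (γ : ℝ → Fin 6 → ℝ) : Prop :=
  ∀ s : ℝ, ∀ i : Fin 3,
    HasDerivAt (fun u => γ u (Qidx i)) (pderiv6 (cubicGamma E) (Pidx i) (γ s)) s ∧
    HasDerivAt (fun u => γ u (Pidx i)) (-pderiv6 (cubicGamma E) (Qidx i) (γ s)) s

/-- The time-preserving symmetry matrix `S_f = diag(R, R)`, `R = [[0,0,1],[−1,0,0],[0,1,0]]`. -/
def Sf : Matrix (Fin 6) (Fin 6) ℝ :=
  !![0, 0, 1, 0, 0, 0;
     -1, 0, 0, 0, 0, 0;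
     0, 1, 0, 0, 0, 0;
     0, 0, 0, 0, 0, 1;
     0, 0, 0, -1, 0, 0;
     0, 0, 0, 0, 1, 0]

/-- The time-reversing symmetry matrix `S_r = diag(S, −S)`, `S = [[0,1,0],[1,0,0],[0,0,1]]`. -/
def Sr : Matrix (Fin 6) (Fin 6) ℝ :=
  !![0, 1, 0, 0, 0, 0;
     1, 0, 0, 0, 0, 0;
     0, 0, 1, 0, 0, 0;
     0, 0, 0, 0, -1, 0;
     0, 0, 0, -1, 0, 0;
     0, 0, 0, 0, 0, -1]

open Set

/-- A function that is positively homogeneous of degree one and `C¹` off the origin is Lipschitz. -/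
lemma hom_one_lipschitz {V : Type*} [NormedAddCommGroup V] [NormedSpace ℝ V] [ProperSpace V]
    (f : V → ℝ) (hom : ∀ t : ℝ, 0 < t → ∀ x, f (t • x) = t * f x)
    (hf : ∀ x, x ≠ 0 → ContDiffAt ℝ 1 f x) : LocallyLipschitz f := by
  have f0 : f 0 = 0 := by
    have := hom 2 (by norm_num) 0
    rw [smul_zero] at this
    linarith
  have hcompact := isCompact_sphere (0 : V) 1
  have hne : ∀ x ∈ Metric.sphere (0 : V) 1, x ≠ 0 := by
    rintro x hx rfl
    simp at hx
  have hder : ∀ t : ℝ, 0 < t → ∀ x, x ≠ 0 → fderiv ℝ f (t • x) = fderiv ℝ f x := by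
    intro t ht x hx
    have h1 := fderiv_comp_smul (𝕜 := ℝ) (f := f) (x := x) t
    have h2 : (fun y => f (t • y)) = fun y => t • f y := by
      funext y; simp [hom t ht]
    rw [h2, fderiv_fun_const_smul ((hf x hx).differentiableAt (by norm_num))] at h1
    exact (smul_right_injective _ ht.ne' h1).symm
  have c1 : ContinuousOn (fderiv ℝ f) (Metric.sphere (0 : V) 1) := fun x hx =>
    ((hf x (hne x hx)).continuousAt_fderiv (by norm_num)).continuousWithinAt
  have c2 : ContinuousOn f (Metric.sphere (0 : V) 1) := fun x hx =>
    (hf x (hne x hx)).continuousAt.continuousWithinAt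
  obtain ⟨C1, hC1⟩ := hcompact.exists_bound_of_continuousOn c1
  obtain ⟨C2, hC2⟩ := hcompact.exists_bound_of_continuousOn c2
  have hunit : ∀ x : V, x ≠ 0 → ‖x‖⁻¹ • x ∈ Metric.sphere (0 : V) 1 := by
    intro x hx
    have : ‖x‖ ≠ 0 := norm_ne_zero_iff.2 hx
    simp [norm_smul, this]
  have B1 : ∀ x : V, x ≠ 0 → ‖fderiv ℝ f x‖ ≤ C1 := by
    intro x hx
    rw [← hder ‖x‖⁻¹ (by positivity) x hx]
    exact hC1 _ (hunit x hx)
  have B2 : ∀ x : V, ‖f x‖ ≤ C2 * ‖x‖ := by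
    intro x
    by_cases hx : x = 0
    · simp [hx, f0]
    · have h := hC2 _ (hunit x hx)
      rw [hom _ (by positivity), norm_mul, norm_inv, norm_norm] at h
      have hp : 0 < ‖x‖ := by positivity
      rwa [inv_mul_le_iff₀ hp, mul_comm] at h
  have key : ∀ x y, ‖f x - f y‖ ≤ max (max C1 C2) 0 * ‖x - y‖ := by
    intro x y
    by_cases h0 : (0 : V) ∈ segment ℝ y x
    · have hd := mem_segment_iff_wbtw.1 h0
      have hd := hd.dist_add_dist
      rw [dist_zero_right, dist_zero_left, dist_eq_norm, norm_sub_rev] at hd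
      have e1 := B2 x
      have e2 := B2 y
      have e3 := norm_sub_le (f x) (f y)
      have e4 : C2 ≤ max (max C1 C2) 0 := by simp
      have e5 := mul_le_mul_of_nonneg_right e4 (norm_nonneg (x - y))
      rw [← hd] at e5 ⊢
      linarith
    · have := (convex_segment y x).norm_image_sub_le_of_norm_hasFDerivWithin_le
        (f := f) (f' := fderiv ℝ f) (𝕜 := ℝ) (C := C1) (x := y) (y := x)
        (fun z hz => (((hf z (fun h => h0 (h ▸ hz))).differentiableAt
          (by norm_num)).hasFDerivAt).hasFDerivWithinAt)
        (fun z hz => B1 z (fun h => h0 (h ▸ hz))) (left_mem_segment ..) (right_mem_segment ..)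
      refine this.trans (mul_le_mul_of_nonneg_right ?_ (norm_nonneg _))
      simp
  exact (LipschitzWith.of_dist_le_mul (K := ⟨max (max C1 C2) 0, by simp⟩) (fun x y => by
    rw [dist_eq_norm, dist_eq_norm]; exact key x y)).locallyLipschitz

lemma ll_mul {V : Type*} [NormedAddCommGroup V] [NormedSpace ℝ V] {f g : V → ℝ}
    (hf : LocallyLipschitz f) (hg : LocallyLipschitz g) :
    LocallyLipschitz fun x => f x * g x :=
  (ContDiff.locallyLipschitz (𝕂 := ℝ) (f := fun p : ℝ × ℝ => p.1 * p.2) (by fun_prop)).comp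
    (hf.prodMk hg)

lemma ll_add {V : Type*} [NormedAddCommGroup V] [NormedSpace ℝ V] {f g : V → ℝ}
    (hf : LocallyLipschitz f) (hg : LocallyLipschitz g) :
    LocallyLipschitz fun x => f x + g x :=
  (ContDiff.locallyLipschitz (𝕂 := ℝ) (f := fun p : ℝ × ℝ => p.1 + p.2) (by fun_prop)).comp
    (hf.prodMk hg)

lemma ll_pi {V : Type*} [NormedAddCommGroup V] [NormedSpace ℝ V] {n : ℕ} {f : V → Fin n → ℝ}
    (hf : ∀ i, LocallyLipschitz fun x => f x i) : LocallyLipschitz f := by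
  intro x
  choose K t ht hK using fun i => hf i x
  refine ⟨∑ i, K i, ⋂ i, t i, (Filter.iInter_mem).2 ht, ?_⟩
  intro y hy z hz
  rw [edist_pi_le_iff]
  intro i
  refine (hK i (mem_iInter.1 hy i) (mem_iInter.1 hz i)).trans ?_
  gcongr
  exact Finset.single_le_sum (f := K) (fun _ _ => zero_le) (Finset.mem_univ i)

lemma ode_unique {n : ℕ} {X : (Fin n → ℝ) → Fin n → ℝ} (hX : LocallyLipschitz X)
    {α β : ℝ → Fin n → ℝ} (hα : ∀ t, HasDerivAt α (X (α t)) t)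
    (hβ : ∀ t, HasDerivAt β (X (β t)) t) {t₀ : ℝ} (h : α t₀ = β t₀) (t : ℝ) : α t = β t := by
  have cα : Continuous α := continuous_iff_continuousAt.2 fun t => (hα t).continuousAt
  have cβ : Continuous β := continuous_iff_continuousAt.2 fun t => (hβ t).continuousAt
  set a := min t t₀ - 1
  set b := max t t₀ + 1
  have l1 := min_le_left t t₀
  have l2 := min_le_right t t₀
  have l3 := le_max_left t t₀
  have l4 := le_max_right t t₀
  have hs : IsCompact (α '' Icc a b ∪ β '' Icc a b) :=
    (isCompact_Icc.image cα).union (isCompact_Icc.image cβ)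
  obtain ⟨K, hK⟩ := (hX.locallyLipschitzOn).exists_lipschitzOnWith_of_compact hs
  refine ODE_solution_unique_of_mem_Ioo (v := fun _ => X) (K := K)
    (s := fun _ => α '' Icc a b ∪ β '' Icc a b) (a := a) (b := b) (t₀ := t₀)
    (fun t _ => hK) ⟨by grind, by grind⟩
    (fun t ht => ⟨hα t, Or.inl ⟨t, Ioo_subset_Icc_self ht, rfl⟩⟩)
    (fun t ht => ⟨hβ t, Or.inr ⟨t, Ioo_subset_Icc_self ht, rfl⟩⟩) h ⟨by grind, by grind⟩

noncomputable def cubH (y z : ℝ) : ℝ := y * z ^ 2 / Real.sqrt (y ^ 4 + z ^ 4)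
noncomputable def cubG (x y : ℝ) : ℝ := x * y ^ 6 / Real.sqrt (x ^ 4 + y ^ 4) ^ 3
noncomputable def cubB (x y z : ℝ) : ℝ :=
  x * y * z * (y ^ 4 + z ^ 4) / Real.sqrt (x ^ 4 + y ^ 4 + z ^ 4) ^ 3


lemma four_ne {y z : ℝ} (h : (y, z) ≠ 0) : 0 < y ^ 4 + z ^ 4 := by
  by_cases hy : y = 0
  · have hz : z ≠ 0 := by rintro rfl; exact h (by simp [hy])
    positivity
  · positivity

lemma four_ne3 {x y z : ℝ} (h : (x, y, z) ≠ 0) : 0 < x ^ 4 + y ^ 4 + z ^ 4 := by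
  by_cases hx : x = 0
  · have hz : (y, z) ≠ 0 := fun h' => h (by simp only [Prod.mk_eq_zero] at h' ⊢; tauto)
    have := four_ne hz
    have hx4 : 0 ≤ x ^ 4 := by positivity
    linarith
  · positivity

lemma sqrt_scale {t k k' : ℝ} (h : k' = (t ^ 2) ^ 2 * k) :
    Real.sqrt k' = t ^ 2 * Real.sqrt k := by
  rw [h, Real.sqrt_mul (by positivity), Real.sqrt_sq (by positivity)]

lemma cubH_ll : LocallyLipschitz fun p : ℝ × ℝ => cubH p.1 p.2 := by
  apply hom_one_lipschitz
  · rintro t ht ⟨y, z⟩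
    have e : Real.sqrt ((t * y) ^ 4 + (t * z) ^ 4) = t ^ 2 * Real.sqrt (y ^ 4 + z ^ 4) :=
      sqrt_scale (by ring)
    simp only [cubH, Prod.smul_mk, smul_eq_mul, e]
    by_cases hS : Real.sqrt (y ^ 4 + z ^ 4) = 0
    · simp [hS]
    · field_simp
  · rintro ⟨y, z⟩ h
    have hp := four_ne h
    refine ContDiffAt.div (by fun_prop) (ContDiffAt.sqrt (by fun_prop) hp.ne') ?_
    exact (Real.sqrt_pos.2 hp).ne'

lemma cubG_ll : LocallyLipschitz fun p : ℝ × ℝ => cubG p.1 p.2 := by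
  apply hom_one_lipschitz
  · rintro t ht ⟨y, z⟩
    have e : Real.sqrt ((t * y) ^ 4 + (t * z) ^ 4) = t ^ 2 * Real.sqrt (y ^ 4 + z ^ 4) :=
      sqrt_scale (by ring)
    simp only [cubG, Prod.smul_mk, smul_eq_mul, e]
    by_cases hS : Real.sqrt (y ^ 4 + z ^ 4) = 0
    · simp [hS]
    · field_simp
  · rintro ⟨y, z⟩ h
    have hp := four_ne h
    refine ContDiffAt.div (by fun_prop) (ContDiffAt.pow (ContDiffAt.sqrt ?_ ?_) 3) ?_
    · fun_prop
    · exact hp.ne'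
    exact (pow_pos (Real.sqrt_pos.2 hp) 3).ne'

lemma cubB_ll : LocallyLipschitz fun p : ℝ × ℝ × ℝ => cubB p.1 p.2.1 p.2.2 := by
  apply hom_one_lipschitz
  · rintro t ht ⟨x, y, z⟩
    have e : Real.sqrt ((t * x) ^ 4 + (t * y) ^ 4 + (t * z) ^ 4)
        = t ^ 2 * Real.sqrt (x ^ 4 + y ^ 4 + z ^ 4) := sqrt_scale (by ring)
    simp only [cubB, Prod.smul_mk, smul_eq_mul, e]
    by_cases hS : Real.sqrt (x ^ 4 + y ^ 4 + z ^ 4) = 0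
    · simp [hS]
    · field_simp
  · rintro ⟨x, y, z⟩ h
    have hp := four_ne3 h
    refine ContDiffAt.div (by fun_prop) (ContDiffAt.pow (ContDiffAt.sqrt ?_ ?_) 3) ?_
    · fun_prop
    · exact hp.ne'
    exact (pow_pos (Real.sqrt_pos.2 hp) 3).ne'

/-- Partial derivative of the Hamiltonian in the first position variable. -/
noncomputable def cubW (E x y z q r : ℝ) : ℝ :=
  (2 * x * (q ^ 2 * z ^ 2 + y ^ 2 * r ^ 2) - 4 * x * z ^ 2 - 4 * x * y ^ 2
    - 2 * E * x * y ^ 2 * z ^ 2)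
  + (((-4 * y * z) * cubB x y z + (-4 * z ^ 2) * cubG x y) +
    ((-4 * y ^ 2) * cubG x z + (-4 * x * y) * cubH y z))

lemma cubW_symm (E x y z q r : ℝ) : cubW E x y z q r = cubW E x z y r q := by
  simp only [cubW, cubB, cubG, cubH]
  rw [show x ^ 4 + z ^ 4 + y ^ 4 = x ^ 4 + y ^ 4 + z ^ 4 by ring,
    show z ^ 4 + y ^ 4 = y ^ 4 + z ^ 4 by ring]
  ring

lemma cubW_neg_x (E x y z q r : ℝ) : cubW E (-x) y z q r = -cubW E x y z q r := by
  simp only [cubW, cubB, cubG, cubH]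
  rw [show (-x) ^ 4 = x ^ 4 by ring]
  ring

lemma cubW_neg_y (E x y z q r : ℝ) : cubW E x (-y) z (-q) r = cubW E x y z q r := by
  simp only [cubW, cubB, cubG, cubH]
  rw [show (-y) ^ 4 = y ^ 4 by ring]
  ring

lemma cubW_neg_z (E x y z q r : ℝ) : cubW E x y (-z) q (-r) = cubW E x y z q r := by
  rw [cubW_symm, cubW_neg_y, cubW_symm]

lemma cubW_ll (E : ℝ) (i j k l m : Fin 6) :
    LocallyLipschitz fun x : Fin 6 → ℝ => cubW E (x i) (x j) (x k) (x l) (x m) := by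
  have pr : ∀ i, LocallyLipschitz fun x : Fin 6 → ℝ => x i := fun i =>
    ContDiff.locallyLipschitz (𝕂 := ℝ) (by fun_prop)
  have hH := cubH_ll.comp ((pr j).prodMk (pr k))
  have hG1 := cubG_ll.comp ((pr i).prodMk (pr j))
  have hG2 := cubG_ll.comp ((pr i).prodMk (pr k))
  have hB := cubB_ll.comp ((pr i).prodMk ((pr j).prodMk (pr k)))
  refine ll_add (ContDiff.locallyLipschitz (𝕂 := ℝ) (by fun_prop))
    (ll_add (ll_add (ll_mul ?_ hB) (ll_mul ?_ hG1)) (ll_add (ll_mul ?_ hG2) (ll_mul ?_ hH)))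
  all_goals exact ContDiff.locallyLipschitz (𝕂 := ℝ) (by fun_prop)

/-- The Hamiltonian vector field. -/
noncomputable def cubX (E : ℝ) (x : Fin 6 → ℝ) : Fin 6 → ℝ :=
  ![2 * x 3 * x 1 ^ 2 * x 2 ^ 2, 2 * x 4 * x 0 ^ 2 * x 2 ^ 2, 2 * x 5 * x 0 ^ 2 * x 1 ^ 2,
    -cubW E (x 0) (x 1) (x 2) (x 4) (x 5), -cubW E (x 1) (x 0) (x 2) (x 3) (x 5),
    -cubW E (x 2) (x 0) (x 1) (x 3) (x 4)]

lemma cubX_ll (E : ℝ) : LocallyLipschitz (cubX E) := by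
  have hn : ∀ {f : (Fin 6 → ℝ) → ℝ}, LocallyLipschitz f → LocallyLipschitz fun x => -f x :=
    fun hf => (ContDiff.locallyLipschitz (𝕂 := ℝ) (f := fun p : ℝ => -p) (by fun_prop)).comp hf
  apply ll_pi
  intro i
  fin_cases i
  · exact ContDiff.locallyLipschitz (𝕂 := ℝ) (f := fun x : Fin 6 → ℝ => 2 * x 3 * x 1 ^ 2 * x 2 ^ 2)
      (by fun_prop)
  · exact ContDiff.locallyLipschitz (𝕂 := ℝ) (f := fun x : Fin 6 → ℝ => 2 * x 4 * x 0 ^ 2 * x 2 ^ 2)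
      (by fun_prop)
  · exact ContDiff.locallyLipschitz (𝕂 := ℝ) (f := fun x : Fin 6 → ℝ => 2 * x 5 * x 0 ^ 2 * x 1 ^ 2)
      (by fun_prop)
  · exact hn (cubW_ll E 0 1 2 4 5)
  · exact hn (cubW_ll E 1 0 2 3 5)
  · exact hn (cubW_ll E 2 0 1 3 4)

lemma Sf_apply (x : Fin 6 → ℝ) : Sf.mulVec x = ![x 2, -x 0, x 1, x 5, -x 3, x 4] := by
  funext i
  fin_cases i <;> simp [Sf, Matrix.mulVec, dotProduct, Fin.sum_univ_succ, Fin.succ]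

lemma cubX_equivariant (E : ℝ) (x : Fin 6 → ℝ) :
    cubX E (Sf.mulVec x) = Sf.mulVec (cubX E x) := by
  rw [Sf_apply, Sf_apply]
  funext i
  fin_cases i
  · simp [cubX]
  · simp [cubX]; ring
  · simp [cubX]; ring
  · simp [cubX, cubW_neg_y]
  · simp [cubX, cubW_neg_x]
    rw [cubW_symm]
  · simp [cubX, cubW_neg_z]
    rw [cubW_symm]

lemma cub_term (c k x : ℝ) (hk : 0 ≤ k) (hc : k = 0 → c = 0) :
    HasDerivAt (fun t : ℝ => 2 * t ^ 2 * c / Real.sqrt (t ^ 4 + k))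
      (4 * x * k * c / Real.sqrt (x ^ 4 + k) ^ 3) x := by
  by_cases h : k = 0
  · simp [hc h, hasDerivAt_const]
  · have hp : 0 < x ^ 4 + k := by positivity
    have hs := Real.sqrt_pos.2 hp
    have hsq := Real.sq_sqrt hp.le
    have h1 : HasDerivAt (fun t : ℝ => t ^ 4 + k) (4 * x ^ 3) x := by
      simpa using (hasDerivAt_pow 4 x).add_const k
    have h2 : HasDerivAt (fun t : ℝ => 2 * t ^ 2 * c) (2 * (2 * x) * c) x := by
      simpa using ((hasDerivAt_pow 2 x).const_mul 2).mul_const c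
    refine (h2.div (h1.sqrt hp.ne') hs.ne').congr_deriv ?_
    set S := Real.sqrt (x ^ 4 + k)
    have hk' : k = S ^ 2 - x ^ 4 := by linarith
    rw [hk']
    field_simp
    ring

/-- The Hamiltonian as a function of six real variables. -/
noncomputable def cubGam (E x y z p q r : ℝ) : ℝ :=
  p ^ 2 * y ^ 2 * z ^ 2 + x ^ 2 * q ^ 2 * z ^ 2 + x ^ 2 * y ^ 2 * r ^ 2
    - 2 * x ^ 2 * y ^ 2 * z ^ 2 / Real.sqrt (x ^ 4 + y ^ 4 + z ^ 4)
    - 2 * x ^ 2 * y ^ 2 * z ^ 2 / Real.sqrt (x ^ 4 + y ^ 4)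
    - 2 * x ^ 2 * y ^ 2 * z ^ 2 / Real.sqrt (x ^ 4 + z ^ 4)
    - 2 * x ^ 2 * y ^ 2 * z ^ 2 / Real.sqrt (y ^ 4 + z ^ 4)
    - 2 * y ^ 2 * z ^ 2 - 2 * x ^ 2 * z ^ 2 - 2 * x ^ 2 * y ^ 2
    - E * x ^ 2 * y ^ 2 * z ^ 2

lemma cubGam_swap (E x y z p q r : ℝ) : cubGam E x y z p q r = cubGam E y x z q p r := by
  simp only [cubGam]
  rw [show y ^ 4 + x ^ 4 = x ^ 4 + y ^ 4 by ring]
  ring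

lemma cubGam_swap' (E x y z p q r : ℝ) : cubGam E x y z p q r = cubGam E x z y p r q := by
  simp only [cubGam]
  rw [show x ^ 4 + z ^ 4 + y ^ 4 = x ^ 4 + y ^ 4 + z ^ 4 by ring,
    show z ^ 4 + y ^ 4 = y ^ 4 + z ^ 4 by ring]
  ring

lemma cubGam_deriv_x (E x y z p q r : ℝ) :
    HasDerivAt (fun t => cubGam E t y z p q r) (cubW E x y z q r) x := by
  have z4 : ∀ {u : ℝ}, u ^ 4 = 0 → u = 0 := fun h => by simpa using h
  have t1 := cub_term (y ^ 2 * z ^ 2) (y ^ 4 + z ^ 4) x (by positivity) (fun h => by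
    have : y ^ 4 = 0 := by nlinarith [sq_nonneg (y ^ 2), sq_nonneg (z ^ 2)]
    simp [z4 this])
  have t2 := cub_term (y ^ 2 * z ^ 2) (y ^ 4) x (by positivity) (fun h => by simp [z4 h])
  have t3 := cub_term (y ^ 2 * z ^ 2) (z ^ 4) x (by positivity) (fun h => by simp [z4 h])
  have hq := hasDerivAt_pow 2 x
  have t4 := hq.mul_const (q ^ 2 * z ^ 2 + y ^ 2 * r ^ 2
    - 2 * y ^ 2 * z ^ 2 / Real.sqrt (y ^ 4 + z ^ 4) - 2 * z ^ 2 - 2 * y ^ 2 - E * y ^ 2 * z ^ 2)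
  have t5 := (((t4.sub t1).sub t2).sub t3).add_const (p ^ 2 * y ^ 2 * z ^ 2 - 2 * y ^ 2 * z ^ 2)
  refine (t5.congr_of_eventuallyEq (Filter.Eventually.of_forall fun t => ?_)).congr_deriv ?_
  · simp only [cubGam, Pi.sub_apply, ← add_assoc]
    ring
  · simp only [cubW, cubB, cubG, cubH, ← add_assoc]
    push_cast
    ring

lemma cubGam_deriv_p (E x y z p q r : ℝ) :
    HasDerivAt (fun t => cubGam E x y z t q r) (2 * p * y ^ 2 * z ^ 2) p := by
  have t := ((hasDerivAt_pow 2 p).mul_const (y ^ 2 * z ^ 2)).add_const (cubGam E x y z 0 q r)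
  refine (t.congr_of_eventuallyEq (Filter.Eventually.of_forall fun t => ?_)).congr_deriv ?_
  · simp only [cubGam]
    ring
  · push_cast
    ring

lemma cubicGamma_eq (E : ℝ) (x : Fin 6 → ℝ) :
    cubicGamma E x = cubGam E (x 0) (x 1) (x 2) (x 3) (x 4) (x 5) := rfl

lemma cubX_hasDeriv (E : ℝ) (γ : ℝ → Fin 6 → ℝ) (hγ : IsCubicSol E γ) (s : ℝ) :
    HasDerivAt γ (cubX E (γ s)) s := by
  rw [hasDerivAt_pi]
  intro i
  set x := γ s
  fin_cases i
  · refine ((hγ s 0).1).congr_deriv (HasDerivAt.deriv ?_)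
    exact cubGam_deriv_p E (x 0) (x 1) (x 2) (x 3) (x 4) (x 5)
  · refine ((hγ s 1).1).congr_deriv (HasDerivAt.deriv ?_)
    have h := cubGam_deriv_p E (x 1) (x 0) (x 2) (x 4) (x 3) (x 5)
    simp only [fun t => cubGam_swap E (x 1) (x 0) (x 2) t (x 3) (x 5)] at h
    exact h
  · refine ((hγ s 2).1).congr_deriv (HasDerivAt.deriv ?_)
    have h := cubGam_deriv_p E (x 2) (x 0) (x 1) (x 5) (x 3) (x 4)
    simp only [fun t => cubGam_swap E (x 2) (x 0) (x 1) t (x 3) (x 4),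
      fun t => cubGam_swap' E (x 0) (x 2) (x 1) (x 3) t (x 4)] at h
    exact h
  · refine ((hγ s 0).2).congr_deriv (congrArg Neg.neg (HasDerivAt.deriv ?_))
    exact cubGam_deriv_x E (x 0) (x 1) (x 2) (x 3) (x 4) (x 5)
  · refine ((hγ s 1).2).congr_deriv (congrArg Neg.neg (HasDerivAt.deriv ?_))
    have h := cubGam_deriv_x E (x 1) (x 0) (x 2) (x 4) (x 3) (x 5)
    simp only [fun t => cubGam_swap E t (x 0) (x 2) (x 4) (x 3) (x 5)] at h
    exact h
  · refine ((hγ s 2).2).congr_deriv (congrArg Neg.neg (HasDerivAt.deriv ?_))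
    have h := cubGam_deriv_x E (x 2) (x 0) (x 1) (x 5) (x 3) (x 4)
    simp only [fun t => cubGam_swap E t (x 0) (x 1) (x 5) (x 3) (x 4),
      fun t => cubGam_swap' E (x 0) t (x 1) (x 3) (x 5) (x 4)] at h
    exact h

/-- If a solution `γ` of the regularized Hamiltonian system (with energy `E < 0`) satisfies
`γ(0) = (0, a, b, √2, −c, d)` and `γ(2τ) = (b, 0, a, d, −√2, −c)` for some `τ > 0`, then
`γ(s + 2τ) = S_f γ(s)` for all `s`, and `γ` is `12τ`-periodic. -/
theorem cubic_periodic_orbit_general (E a b c d τ : ℝ) (hE : E < 0) (hτ : 0 < τ)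
    (γ : ℝ → Fin 6 → ℝ) (hγ : IsCubicSol E γ)
    (h0 : γ 0 = ![0, a, b, Real.sqrt 2, -c, d])
    (h2 : γ (2 * τ) = ![b, 0, a, d, -Real.sqrt 2, -c]) :
    (∀ s : ℝ, γ (s + 2 * τ) = Sf.mulVec (γ s)) ∧
    (∀ s : ℝ, γ (s + 12 * τ) = γ s) := by
  have hX := cubX_hasDeriv E γ hγ
  have key : ∀ s : ℝ, γ (s + 2 * τ) = Sf.mulVec (γ s) := by
    intro s
    refine ode_unique (cubX_ll E) (α := fun s => γ (s + 2 * τ)) (β := fun s => Sf.mulVec (γ s))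
      (t₀ := 0) ?_ ?_ ?_ s
    · intro t
      exact (hX (t + 2 * τ)).comp_add_const t (2 * τ)
    · intro t
      rw [cubX_equivariant]
      exact ((Matrix.mulVecLin Sf).toContinuousLinearMap.hasFDerivAt).comp_hasDerivAt t (hX t)
    · simp only [zero_add]
      rw [h2, h0, Sf_apply]
      funext i
      fin_cases i <;> simp
  refine ⟨key, fun s => ?_⟩
  have e : s + 12 * τ = s + 2 * τ + 2 * τ + 2 * τ + 2 * τ + 2 * τ + 2 * τ := by ring
  rw [e, key, key, key, key, key, key]
  simp only [Sf_apply]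
  funext i
  fin_cases i <;> simp
end

section
/- Let γ be a T-periodic solution of the Hamiltonian system ẋ = J∇Γ(x) and let S be a 2n×2n real orthogonal matrix with SJ = JS, Γ(Sx) = Γ(x) for all x, and γ(s + T/N) = S γ(s) for all s, for some N ∈ ℕ, N ≥ 1. Then the fundamental matrix solution X of the linearization along γ satisfies X(kT/N) = Sᵏ (Sᵀ X(T/N))ᵏ for every k ∈ ℕ. -/
open Matrix

/-- The standard `2n × 2n` symplectic matrix `J = [[0, I],[−I, 0]]`, with the index set
`Fin n ⊕ Fin n` (first summand: configuration coordinates, second: momenta). -/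
def stdJ (n : ℕ) : Matrix (Fin n ⊕ Fin n) (Fin n ⊕ Fin n) ℝ :=
  Matrix.fromBlocks 0 1 (-1) 0

/-- The gradient of `f : ℝ^ι → ℝ` at `x`, componentwise via the Fréchet derivative. -/
noncomputable def gradV {ι : Type} [Fintype ι] [DecidableEq ι]
    (f : (ι → ℝ) → ℝ) (x : ι → ℝ) : ι → ℝ :=
  fun i => fderiv ℝ f x (Pi.single i 1)

/-- The Hessian matrix `D²f(x)` of `f : ℝ^ι → ℝ` at `x`. -/
noncomputable def hessM {ι : Type} [Fintype ι] [DecidableEq ι]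
    (f : (ι → ℝ) → ℝ) (x : ι → ℝ) : Matrix ι ι ℝ :=
  Matrix.of fun i j => fderiv ℝ (fun y => fderiv ℝ f y (Pi.single j 1)) x (Pi.single i 1)

section helpers

variable {ι : Type} [Fintype ι] [DecidableEq ι]

lemma rob_hessM_apply (f : (ι → ℝ) → ℝ) (hf : ContDiff ℝ 2 f) (x : ι → ℝ) (i j : ι) :
    hessM f x i j = fderiv ℝ (fderiv ℝ f) x (Pi.single i 1) (Pi.single j 1) := by
  have hd : Differentiable ℝ (fderiv ℝ f) :=
    (hf.fderiv_right (m := 1) (by norm_num)).differentiable (by norm_num)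
  have h := ((hd x).hasFDerivAt.clm_apply
    (hasFDerivAt_const (Pi.single j (1:ℝ) : ι → ℝ) x)).fderiv
  simp only [hessM, Matrix.of_apply]
  rw [h]
  simp

lemma rob_hessM_symm (f : (ι → ℝ) → ℝ) (hf : ContDiff ℝ 2 f) (x : ι → ℝ) :
    (hessM f x)ᵀ = hessM f x := by
  ext i j
  rw [Matrix.transpose_apply, rob_hessM_apply f hf, rob_hessM_apply f hf]
  have : IsSymmSndFDerivAt ℝ f x := hf.contDiffAt.isSymmSndFDerivAt (by simp)
  exact this _ _

lemma rob_hessM_bilin (f : (ι → ℝ) → ℝ) (hf : ContDiff ℝ 2 f) (x v w : ι → ℝ) :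
    fderiv ℝ (fderiv ℝ f) x v w = ∑ a, ∑ b, v a * hessM f x a b * w b := by
  conv_lhs => rw [pi_eq_sum_univ' v, pi_eq_sum_univ' w]
  simp only [map_sum, map_smul, _root_.sum_apply, _root_.smul_apply,
    rob_hessM_apply f hf, smul_eq_mul, Finset.mul_sum]
  refine (Finset.sum_comm).trans ?_
  refine Finset.sum_congr rfl fun a _ => Finset.sum_congr rfl fun b _ => ?_
  ring

lemma rob_hessM_equiv (f : (ι → ℝ) → ℝ) (hf : ContDiff ℝ 2 f) (S : Matrix ι ι ℝ)
    (hS : ∀ x, f (S.mulVec x) = f x) (x : ι → ℝ) :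
    Sᵀ * hessM f (S.mulVec x) * S = hessM f x := by
  set L : (ι → ℝ) →L[ℝ] (ι → ℝ) := LinearMap.toContinuousLinearMap S.mulVecLin with hL
  have hLa : ∀ y, L y = S.mulVec y := fun y => rfl
  have hd1 : Differentiable ℝ f := hf.differentiable (by norm_num)
  have hd : Differentiable ℝ (fderiv ℝ f) :=
    (hf.fderiv_right (m := 1) (by norm_num)).differentiable (by norm_num)
  have h1 : ∀ y w, fderiv ℝ f y w = fderiv ℝ f (L y) (L w) := by
    intro y w
    have h := ((hd1 (L y)).hasFDerivAt.comp y L.hasFDerivAt).fderiv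
    have e : f ∘ L = f := by ext z; exact hS z
    rw [e] at h
    rw [h]; rfl
  ext i j
  have h2 : hessM f x i j = fderiv ℝ (fderiv ℝ f) (L x) (L (Pi.single i 1)) (L (Pi.single j 1)) := by
    simp only [hessM, Matrix.of_apply]
    have e : (fun y => fderiv ℝ f y (Pi.single j 1)) =
        fun y => fderiv ℝ f (L y) (L (Pi.single j 1)) := by ext y; exact h1 _ _
    rw [e]
    have h := (((hd (L x)).hasFDerivAt.comp x L.hasFDerivAt).clm_apply
      (hasFDerivAt_const (L (Pi.single j (1:ℝ) : ι → ℝ)) x)).fderiv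
    simp only [Function.comp_apply] at h
    rw [h]
    simp
  rw [h2, rob_hessM_bilin f hf]
  simp only [hLa, Matrix.mulVec_single_one, Matrix.mul_apply, Matrix.transpose_apply,
    Finset.sum_mul, Matrix.col_apply]
  exact Finset.sum_comm

/-- Entrywise differentiation of matrix-valued functions. -/
def RobED (A : ℝ → Matrix ι ι ℝ) (A' : Matrix ι ι ℝ) (s : ℝ) : Prop :=
  ∀ i j, HasDerivAt (fun u => A u i j) (A' i j) s

lemma RobED.mul {A B : ℝ → Matrix ι ι ℝ} {A' B' : Matrix ι ι ℝ} {s : ℝ}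
    (hA : RobED A A' s) (hB : RobED B B' s) :
    RobED (fun u => A u * B u) (A' * B s + A s * B') s := by
  intro i j
  simp only [Matrix.mul_apply, Matrix.add_apply, ← Finset.sum_add_distrib]
  exact HasDerivAt.fun_sum fun k _ => (hA i k).mul (hB k j)

lemma RobED.const (C : Matrix ι ι ℝ) (s : ℝ) : RobED (fun _ => C) 0 s :=
  fun i j => hasDerivAt_const s (C i j)

lemma RobED.eq_of_zero {A : ℝ → Matrix ι ι ℝ} (h : ∀ s, RobED A 0 s) (s t : ℝ) : A s = A t := by
  ext i j
  exact is_const_of_deriv_eq_zero (f := fun u => A u i j) (fun u => (h u i j).differentiableAt)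
    (fun u => (h u i j).deriv) s t

/-- Conservation of the symplectic form along two solutions. -/
lemma rob_wronskian (J : Matrix ι ι ℝ) (hJt : Jᵀ = -J) (hJ2 : J * J = -1)
    (H X Y : ℝ → Matrix ι ι ℝ) (hH : ∀ s, (H s)ᵀ = H s)
    (hX : ∀ s, RobED X (J * H s * X s) s) (hY : ∀ s, RobED Y (J * H s * Y s) s) (s t : ℝ) :
    (X s)ᵀ * J * Y s = (X t)ᵀ * J * Y t := by
  refine RobED.eq_of_zero (A := fun s => (X s)ᵀ * J * Y s) (fun s => ?_) s t
  have hXt : RobED (fun u => (X u)ᵀ) (J * H s * X s)ᵀ s := fun i j => hX s j i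
  have h := (hXt.mul (RobED.const J s)).mul (hY s)
  convert h using 1
  simp only [Matrix.transpose_mul, hJt, hH, mul_zero, add_zero]
  have e1 : (X s)ᵀ * (H s * -J) * J * Y s = (X s)ᵀ * H s * (-(J * J)) * Y s := by noncomm_ring
  have e2 : (X s)ᵀ * J * (J * H s * Y s) = (X s)ᵀ * (J * J) * H s * Y s := by noncomm_ring
  rw [e1, e2, hJ2]; noncomm_ring

end helpers

/-- Roberts' Corollary 2.2: under the hypotheses of the time-preserving symmetry lemma,
the fundamental matrix solution satisfies `X(kT/N) = Sᵏ (Sᵀ X(T/N))ᵏ` for every `k ∈ ℕ`. -/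
theorem roberts_time_preserving_iterate (n N : ℕ) (hn : 1 ≤ n) (hN : 1 ≤ N) (T : ℝ) (hT : 0 < T)
    (Γ : ((Fin n ⊕ Fin n) → ℝ) → ℝ) (hΓ : ContDiff ℝ 2 Γ)
    (γ : ℝ → (Fin n ⊕ Fin n) → ℝ)
    (hsol : ∀ s : ℝ, HasDerivAt γ ((stdJ n).mulVec (gradV Γ (γ s))) s)
    (hper : ∀ s : ℝ, γ (s + T) = γ s)
    (S : Matrix (Fin n ⊕ Fin n) (Fin n ⊕ Fin n) ℝ)
    (hsym : ∀ s : ℝ, γ (s + T / N) = S.mulVec (γ s))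
    (hSinv : ∀ x, Γ (S.mulVec x) = Γ x)
    (hSJ : S * stdJ n = stdJ n * S)
    (horth : Sᵀ * S = 1)
    (X : ℝ → Matrix (Fin n ⊕ Fin n) (Fin n ⊕ Fin n) ℝ)
    (hX0 : X 0 = 1)
    (hX : ∀ (s : ℝ) (i j : Fin n ⊕ Fin n),
      HasDerivAt (fun u => X u i j) ((stdJ n * hessM Γ (γ s) * X s) i j) s) :
    ∀ k : ℕ, X ((k : ℝ) * T / N) = S ^ k * (Sᵀ * X (T / N)) ^ k := by
  set J := stdJ n with hJ
  have hJt : Jᵀ = -J := by simp [hJ, stdJ, Matrix.fromBlocks_transpose, Matrix.fromBlocks_neg]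
  have hJ2 : J * J = -1 := by
    rw [hJ, stdJ, Matrix.fromBlocks_multiply, ← Matrix.fromBlocks_one, Matrix.fromBlocks_neg]
    simp
  have horth' : S * Sᵀ = 1 := mul_eq_one_comm.mp horth
  set τ := T / (N : ℝ) with hτ
  set H : ℝ → Matrix (Fin n ⊕ Fin n) (Fin n ⊕ Fin n) ℝ := fun s => hessM Γ (γ s) with hH
  have hHs : ∀ s, (H s)ᵀ = H s := fun s => rob_hessM_symm Γ hΓ _
  have hX' : ∀ s, RobED X (J * H s * X s) s := fun s i j => hX s i j
  have hHτ : ∀ s, H (s + τ) = S * H s * Sᵀ := by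
    intro s
    have h := rob_hessM_equiv Γ hΓ S hSinv (γ s)
    rw [← hsym s] at h
    calc H (s + τ) = (S * Sᵀ) * H (s + τ) * (S * Sᵀ) := by rw [horth']; simp
      _ = S * (Sᵀ * hessM Γ (γ (s + τ)) * S) * Sᵀ := by simp only [hH, mul_assoc]
      _ = _ := by rw [h]
  have hX1 : ∀ s, RobED (fun s => X (s + τ)) (J * H (s + τ) * X (s + τ)) s := fun s i j =>
    (hX' (s + τ) i j).comp_add_const s τ
  have hY : ∀ s, RobED (fun s => S * X s * (Sᵀ * X τ))
      (J * H (s + τ) * (S * X s * (Sᵀ * X τ))) s := by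
    intro s
    have h := ((RobED.const S s).mul (hX' s)).mul (RobED.const (Sᵀ * X τ) s)
    convert h using 1
    rw [hHτ]
    calc J * (S * H s * Sᵀ) * (S * X s * (Sᵀ * X τ))
        = (J * S) * H s * (Sᵀ * S) * X s * (Sᵀ * X τ) := by simp only [mul_assoc]
      _ = _ := by rw [horth, ← hSJ]; simp only [mul_assoc, mul_one, zero_mul, mul_zero, zero_add, add_zero]
  have hsymp : ∀ s, (X s)ᵀ * J * X s = J := by
    intro s
    rw [rob_wronskian J hJt hJ2 H X X hHs hX' hX' s 0, hX0]; simp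
  have hinv : ∀ s, (-J * (X s)ᵀ * J) * X s = 1 := by
    intro s
    calc _ = -J * ((X s)ᵀ * J * X s) := by simp only [mul_assoc]
      _ = 1 := by rw [hsymp]; simp [hJ2]
  have hinv' : ∀ s, X s * (-J * (X s)ᵀ * J) = 1 := fun s => mul_eq_one_comm.mp (hinv s)
  have key : ∀ s, X (s + τ) = S * X s * (Sᵀ * X τ) := by
    intro s
    have h := rob_wronskian J hJt hJ2 (fun s => H (s + τ)) _ _ (fun s => hHs _) hX1 hY s 0
    simp only [hX0, zero_add, mul_one] at h
    rw [← mul_assoc S, horth', one_mul, hsymp] at h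
    calc X (s + τ) = X (s + τ) * (-J * J) := by simp [hJ2]
      _ = X (s + τ) * (-J * (X (s + τ))ᵀ * J) * (S * X s * (Sᵀ * X τ)) := by
        have e3 : ∀ A B C D : Matrix (Fin n ⊕ Fin n) (Fin n ⊕ Fin n) ℝ,
            A * (-J * B * C) * D = A * (-J * (B * C * D)) := by
          intro A B C D; simp only [mul_assoc]
        rw [e3, h]
      _ = _ := by rw [hinv', one_mul]
  intro k
  induction k with
  | zero => simp [hX0]
  | succ k ih =>
    have e : ((k + 1 : ℕ) : ℝ) * T / N = (k : ℝ) * T / N + τ := by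
      rw [hτ]; push_cast; ring
    rw [e, key, ih, pow_succ' S, pow_succ (Sᵀ * X τ)]
    simp only [mul_assoc]
end

section
/- Let γ be a T-periodic solution of the Hamiltonian system ẋ = J∇Γ(x) and let S be a 2n×2n real orthogonal matrix with SJ = −JS, Γ(Sx) = Γ(x) for all x, and γ(−s + T/N) = S γ(s) for all s, for some N ∈ ℕ, N ≥ 1. Then the fundamental matrix solution X of the linearization along γ satisfies X(T/N) = S A⁻¹ Sᵀ A, where A = X(T/(2N)). -/
open Matrix

theorem hessM_apply_aux {ι : Type} [Fintype ι] [DecidableEq ι]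
    (f : (ι → ℝ) → ℝ) (hf : ContDiff ℝ 2 f) (x : ι → ℝ) (i j : ι) :
    hessM f x i j = fderiv ℝ (fderiv ℝ f) x (Pi.single i 1) (Pi.single j 1) := by
  have hd : Differentiable ℝ (fderiv ℝ f) :=
    (hf.fderiv_right (m := 1) (by norm_num)).differentiable (by norm_num)
  simp only [hessM, Matrix.of_apply]
  rw [fderiv_clm_apply (hd x) (differentiableAt_const _)]
  simp

theorem hessM_symm_aux {ι : Type} [Fintype ι] [DecidableEq ι]
    (f : (ι → ℝ) → ℝ) (hf : ContDiff ℝ 2 f) (x : ι → ℝ) :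
    (hessM f x)ᵀ = hessM f x := by
  ext i j
  rw [Matrix.transpose_apply, hessM_apply_aux f hf, hessM_apply_aux f hf]
  exact (hf.contDiffAt.isSymmSndFDerivAt (by simp)).eq _ _

theorem hessM_conj_aux {ι : Type} [Fintype ι] [DecidableEq ι]
    (f : (ι → ℝ) → ℝ) (hf : ContDiff ℝ 2 f) (S : Matrix ι ι ℝ)
    (hS : ∀ x, f (S.mulVec x) = f x) (x : ι → ℝ) :
    Sᵀ * hessM f (S.mulVec x) * S = hessM f x := by
  have hd : Differentiable ℝ (fderiv ℝ f) :=
    (hf.fderiv_right (m := 1) (by norm_num)).differentiable (by norm_num)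
  have hd0 : Differentiable ℝ f := hf.differentiable (by norm_num)
  let L : (ι → ℝ) →L[ℝ] (ι → ℝ) := LinearMap.toContinuousLinearMap S.mulVecLin
  have hL : ∀ y, L y = S.mulVec y := fun y => rfl
  have h1 : ∀ y, fderiv ℝ f y = (fderiv ℝ f (L y)).comp L := by
    intro y
    have h : HasFDerivAt (fun z => f (L z)) ((fderiv ℝ f (L y)).comp L) y :=
      (hd0 (L y)).hasFDerivAt.comp y L.hasFDerivAt
    have e : (fun z => f (L z)) = f := funext hS
    rw [e] at h
    exact h.fderiv
  have h2 : ∀ u v, fderiv ℝ (fderiv ℝ f) x u v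
      = fderiv ℝ (fderiv ℝ f) (L x) (L u) (L v) := by
    intro u v
    have ha : HasFDerivAt (fun z => fderiv ℝ f (L z))
        ((fderiv ℝ (fderiv ℝ f) (L x)).comp L) x :=
      (hd (L x)).hasFDerivAt.comp x L.hasFDerivAt
    have hb := ha.clm_apply (hasFDerivAt_const (L v) x)
    have hc := (hd x).hasFDerivAt.clm_apply (hasFDerivAt_const v x)
    have e : (fun z => fderiv ℝ f z v) = (fun z => fderiv ℝ f (L z) (L v)) := by
      funext z
      rw [h1 z]; rfl
    rw [e] at hc
    have := congrArg (fun M => M u) (hc.unique hb)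
    simpa using this
  have h3 : ∀ i, L (Pi.single i 1) = ∑ k, S k i • (Pi.single k 1 : ι → ℝ) := by
    intro i
    ext k
    simp [hL, Finset.sum_apply, Pi.single_apply]
  ext i j
  rw [hessM_apply_aux f hf, h2, h3, h3]
  simp only [Matrix.mul_apply, hessM_apply_aux f hf, Matrix.transpose_apply, map_sum, map_smul,
    ContinuousLinearMap.sum_apply, ContinuousLinearMap.smul_apply, smul_eq_mul, ← hL]
  refine Finset.sum_congr rfl fun k _ => ?_
  rw [Finset.sum_mul]
  simp only [Finset.mul_sum, Finset.sum_mul]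
  refine Finset.sum_congr rfl fun l _ => ?_
  ring

theorem hasDerivAt_mul_aux {ι : Type} [Fintype ι] (U V : ℝ → Matrix ι ι ℝ)
    (U' V' : Matrix ι ι ℝ) (s : ℝ)
    (hU : ∀ i j, HasDerivAt (fun u => U u i j) (U' i j) s)
    (hV : ∀ i j, HasDerivAt (fun u => V u i j) (V' i j) s) (i j : ι) :
    HasDerivAt (fun u => (U u * V u) i j) ((U' * V s + U s * V') i j) s := by
  simp only [Matrix.mul_apply, Matrix.add_apply, ← Finset.sum_add_distrib]
  exact HasDerivAt.fun_sum fun k _ => (hU i k).mul (hV k j)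

theorem const_mul_aux {ι : Type} [Fintype ι] (C : Matrix ι ι ℝ) (V : ℝ → Matrix ι ι ℝ)
    (V' : Matrix ι ι ℝ) (s : ℝ)
    (hV : ∀ i j, HasDerivAt (fun u => V u i j) (V' i j) s) (i j : ι) :
    HasDerivAt (fun u => (C * V u) i j) ((C * V') i j) s := by
  have := hasDerivAt_mul_aux (fun _ => C) V 0 V' s (fun i j => hasDerivAt_const _ _) hV i j
  simpa using this

theorem stdJ_sq_aux (n : ℕ) : stdJ n * stdJ n = -1 := by
  simp [stdJ, Matrix.fromBlocks_multiply, ← Matrix.fromBlocks_one, Matrix.fromBlocks_neg]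

theorem stdJ_transpose_aux (n : ℕ) : (stdJ n)ᵀ = -stdJ n := by
  simp [stdJ, Matrix.fromBlocks_transpose, Matrix.fromBlocks_neg]

theorem wronskian_aux (n : ℕ) (H : ℝ → Matrix (Fin n ⊕ Fin n) (Fin n ⊕ Fin n) ℝ)
    (hH : ∀ s, (H s)ᵀ = H s) (U V : ℝ → Matrix (Fin n ⊕ Fin n) (Fin n ⊕ Fin n) ℝ)
    (hU : ∀ s i j, HasDerivAt (fun u => U u i j) ((stdJ n * H s * U s) i j) s)
    (hV : ∀ s i j, HasDerivAt (fun u => V u i j) ((stdJ n * H s * V s) i j) s) (s : ℝ) :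
    (U s)ᵀ * (stdJ n * V s) = (U 0)ᵀ * (stdJ n * V 0) := by
  ext i j
  have key : ∀ t, HasDerivAt (fun u => ((U u)ᵀ * (stdJ n * V u)) i j) 0 t := by
    intro t
    have h := hasDerivAt_mul_aux (fun u => (U u)ᵀ) (fun u => stdJ n * V u)
      (stdJ n * H t * U t)ᵀ (stdJ n * (stdJ n * H t * V t)) t
      (fun i j => hU t j i) (const_mul_aux _ V _ t (hV t)) i j
    have e : (stdJ n * H t * U t)ᵀ * (stdJ n * V t)
        + (U t)ᵀ * (stdJ n * (stdJ n * H t * V t)) = 0 := by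
      have q1 : stdJ n * (stdJ n * H t * V t) = -(H t * V t) := by
        rw [← mul_assoc, ← mul_assoc, stdJ_sq_aux]; simp
      have q2 : (stdJ n * H t * U t)ᵀ * (stdJ n * V t) = (U t)ᵀ * (H t * V t) := by
        rw [Matrix.transpose_mul, Matrix.transpose_mul, hH, stdJ_transpose_aux]
        have : (U t)ᵀ * (H t * -stdJ n) * (stdJ n * V t)
          = -((U t)ᵀ * (H t * ((stdJ n * stdJ n) * V t))) := by
          simp only [mul_neg, neg_mul, mul_assoc]
        rw [this, stdJ_sq_aux]; simp
      rw [q1, q2]; simp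
    rw [e] at h
    exact h
  exact is_const_of_deriv_eq_zero (fun t => (key t).differentiableAt)
    (fun t => (key t).deriv) s 0

/-- Roberts' Corollary 2.5: under the hypotheses of the time-reversing symmetry lemma,
the fundamental matrix solution satisfies `X(T/N) = S A⁻¹ Sᵀ A` with `A = X(T/(2N))`. -/
theorem roberts_time_reversing_half (n N : ℕ) (hn : 1 ≤ n) (hN : 1 ≤ N) (T : ℝ) (hT : 0 < T)
    (Γ : ((Fin n ⊕ Fin n) → ℝ) → ℝ) (hΓ : ContDiff ℝ 2 Γ)
    (γ : ℝ → (Fin n ⊕ Fin n) → ℝ)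
    (hsol : ∀ s : ℝ, HasDerivAt γ ((stdJ n).mulVec (gradV Γ (γ s))) s)
    (hper : ∀ s : ℝ, γ (s + T) = γ s)
    (S : Matrix (Fin n ⊕ Fin n) (Fin n ⊕ Fin n) ℝ)
    (hsym : ∀ s : ℝ, γ (-s + T / N) = S.mulVec (γ s))
    (hSinv : ∀ x, Γ (S.mulVec x) = Γ x)
    (hSJ : S * stdJ n = -(stdJ n * S))
    (horth : Sᵀ * S = 1)
    (X : ℝ → Matrix (Fin n ⊕ Fin n) (Fin n ⊕ Fin n) ℝ)
    (hX0 : X 0 = 1)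
    (hX : ∀ (s : ℝ) (i j : Fin n ⊕ Fin n),
      HasDerivAt (fun u => X u i j) ((stdJ n * hessM Γ (γ s) * X s) i j) s) :
    X (T / N) = S * (X (T / (2 * N)))⁻¹ * Sᵀ * X (T / (2 * N)) := by
  have hSS : S * Sᵀ = 1 := mul_eq_one_comm.mp horth
  have hH : ∀ s, (hessM Γ (γ s))ᵀ = hessM Γ (γ s) := fun s => hessM_symm_aux Γ hΓ _
  have hconj : ∀ s, Sᵀ * (stdJ n * hessM Γ (γ (-s + T / N))) = -(stdJ n * hessM Γ (γ s) * Sᵀ) := by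
    intro s
    have h := hessM_conj_aux Γ hΓ S hSinv (γ s)
    rw [← hsym] at h
    have hSJ' : Sᵀ * stdJ n = -(stdJ n * Sᵀ) := by
      have h1 : Sᵀ * (S * stdJ n) * Sᵀ = Sᵀ * -(stdJ n * S) * Sᵀ := by rw [hSJ]
      have h2 : Sᵀ * (S * stdJ n) * Sᵀ = stdJ n * Sᵀ := by
        rw [← mul_assoc, horth, one_mul]
      have h3 : Sᵀ * -(stdJ n * S) * Sᵀ = -(Sᵀ * stdJ n) := by
        rw [mul_neg, neg_mul, mul_assoc, mul_assoc, hSS, mul_one]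
      rw [← h2, h1, h3, neg_neg]
    rw [← h, ← mul_assoc, hSJ']
    simp only [neg_mul, mul_assoc, hSS, mul_one]
  have hZ : ∀ s i j, HasDerivAt (fun u => (Sᵀ * X (-u + T / N)) i j)
      ((stdJ n * hessM Γ (γ s) * (Sᵀ * X (-s + T / N))) i j) s := by
    intro s
    have h := const_mul_aux Sᵀ (fun u => X (-u + T / N))
      (-(stdJ n * hessM Γ (γ (-s + T / N)) * X (-s + T / N))) s (fun i j => by
        have hin : HasDerivAt (fun u : ℝ => -u + T / N) (-1) s :=
          (hasDerivAt_id s).neg.add_const _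
        have := (hX (-s + T / N) i j).comp s hin
        simpa [Function.comp_def] using this)
    have e : Sᵀ * -(stdJ n * hessM Γ (γ (-s + T / N)) * X (-s + T / N))
        = stdJ n * hessM Γ (γ s) * (Sᵀ * X (-s + T / N)) := by
      rw [mul_neg, ← mul_assoc, hconj, neg_mul, neg_neg, mul_assoc]
    rw [e] at h
    exact h
  have w1 := wronskian_aux n _ hH X X hX hX (T / (2 * N))
  have w2 := wronskian_aux n _ hH X (fun u => Sᵀ * X (-u + T / N)) hX hZ (T / (2 * N))
  have hN' : (N : ℝ) ≠ 0 := by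
    have : N ≠ 0 := by omega
    exact_mod_cast this
  have ht : -(T / (2 * N)) + T / N = T / (2 * N) := by field_simp; ring
  simp only [hX0, ht, neg_zero, zero_add, Matrix.transpose_one, one_mul, mul_one] at w1 w2
  set A := X (T / (2 * N)) with hA
  have hinv : (-(stdJ n) * Aᵀ * stdJ n) * A = 1 := by
    rw [mul_assoc, mul_assoc, w1, neg_mul, stdJ_sq_aux, neg_neg]
  have hAi : A⁻¹ = -(stdJ n) * Aᵀ * stdJ n := Matrix.inv_eq_left_inv hinv
  have h4 : A⁻¹ * (Sᵀ * A) = Sᵀ * X (T / N) := by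
    rw [hAi, mul_assoc, mul_assoc, w2, ← mul_assoc, neg_mul, stdJ_sq_aux, neg_neg, one_mul]
  rw [mul_assoc, mul_assoc, h4, ← mul_assoc, hSS, one_mul]
end
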